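/- Let P be the product of a reduced sequence of t ≥ 1 matrices, each taken from {R₁, R₂, R₃, R₁⁻¹, R₂⁻¹, R₃⁻¹}, viewed as a 3×3 matrix over ℚ. Then every entry of 5^t·P is an integer, and at least one entry of 5^t·P is not divisible by 5; equivalently, at least one entry of P, written as a fraction in lowest terms, has denominator exactly 5^t. -/

import Mathlib

open Matrix

/-- The three rational rotation matrices `R₁, R₂, R₃`. -/
def Rgen : Fin 3 → Matrix (Fin 3) (Fin 3) ℚ :=
  ![!![1, 0, 0; 0, -3/5, 4/5; 0, -4/5, -3/5],
    !![-3/5, 0, -4/5; 0, 1, 0; 4/5, 0, -3/5],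
    !![-3/5, 4/5, 0; -4/5, -3/5, 0; 0, 0, 1]]

/-- The factor corresponding to the letter `(i, b)`: `Rᵢ` if `b = true`,
`Rᵢ⁻¹` if `b = false`. -/
noncomputable def RgenLetter (p : Fin 3 × Bool) : Matrix (Fin 3) (Fin 3) ℚ :=
  if p.2 then Rgen p.1 else (Rgen p.1)⁻¹

/-!
Modulo 5 each matrix `5 • Rᵢ^{±1}` has rank one. The conic `x² + y² + z² = 0` over `𝔽₅` has exactly
six points, and they can be labelled `e(p)` by the six letters `p = (i, b)` so that
`5 • RgenLetter p ≡ e(p) e(p⁻¹)ᵀ`, where `p⁻¹ = (i, !b)` is the inverse letter.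
Two points of a smooth conic are orthogonal only if they coincide, so `e(p⁻¹) ⬝ᵥ e(q) = 0` exactly
when `q = p⁻¹`. Hence in a reduced word every scalar `e(p⁻¹) ⬝ᵥ e(q)` produced by multiplying the
rank-one matrices is nonzero, and the product does not vanish modulo 5.
-/

section RankOne

variable {α n R : Type*} [Fintype n] [DecidableEq n] [Semiring R] [NoZeroDivisors R]
  {u v : α → n → R}

theorem exists_prod_map_vecMulVec_cons_eq (hv : ∀ a, v a ≠ 0) {a : α} {l : List α}
    (hl : (a :: l).IsChain fun a b => v a ⬝ᵥ u b ≠ 0) :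
    ∃ x ≠ 0, ((a :: l).map fun a => vecMulVec (u a) (v a)).prod = vecMulVec (u a) x := by
  induction l generalizing a with
  | nil => exact ⟨v a, hv a, by simp⟩
  | cons b l ih =>
    obtain ⟨hab, hbl⟩ := List.isChain_cons_cons.mp hl
    obtain ⟨x, hx, hprod⟩ := ih hbl
    obtain ⟨i, hi⟩ := Function.ne_iff.mp hx
    refine ⟨(v a ⬝ᵥ u b) • x, fun h => mul_ne_zero hab hi (congrFun h i), ?_⟩
    rw [List.map_cons, List.prod_cons, hprod, vecMulVec_mul_vecMulVec]

theorem prod_map_vecMulVec_ne_zero [Nontrivial R] [Nonempty n] (hu : ∀ a, u a ≠ 0)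
    (hv : ∀ a, v a ≠ 0) {l : List α} (hl : l.IsChain fun a b => v a ⬝ᵥ u b ≠ 0) :
    (l.map fun a => vecMulVec (u a) (v a)).prod ≠ 0 := by
  cases l with
  | nil => simp
  | cons a l =>
    obtain ⟨x, hx, hprod⟩ := exists_prod_map_vecMulVec_cons_eq hv hl
    exact hprod ▸ vecMulVec_ne_zero (hu a) hx

end RankOne

section Integrality

theorem exists_not_dvd_of_map_intCast_ne_zero {m n : Type*} {k : ℕ} {A : Matrix m n ℤ}
    (hA : A.map (Int.castRingHom (ZMod k)) ≠ 0) : ∃ i j, ¬ (k : ℤ) ∣ A i j := by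
  contrapose! hA
  ext i j
  exact (ZMod.intCast_zmod_eq_zero_iff_dvd _ k).mpr (hA i j)

theorem den_eq_pow_of_pow_mul_eq_intCast {p : ℕ} (hp : p.Prime) {k : ℕ} {q : ℚ} {m : ℤ}
    (hq : (p : ℚ) ^ k * q = m) (hm : ¬ (p : ℤ) ∣ m) : q.den = p ^ k := by
  have hpos : 0 < (p : ℤ) ^ k := pow_pos (mod_cast hp.pos) k
  have hcop : m.natAbs.Coprime ((p : ℤ) ^ k).natAbs := by
    rw [Int.natAbs_pow, Int.natAbs_natCast]
    exact ((hp.coprime_iff_not_dvd.mpr (mt Int.natCast_dvd.mpr hm)).symm).pow_right k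
  have hdiv : q = (m : ℚ) / ((p : ℤ) ^ k : ℤ) := by
    rw [eq_div_iff (mod_cast hpos.ne'), ← hq]
    push_cast
    ring
  exact_mod_cast hdiv ▸ Rat.den_div_eq_of_coprime hpos hcop

variable {α n R S : Type*} [Fintype n] [DecidableEq n] [Semiring S]

theorem map_prod_map_eq_prod_map [Semiring R] (f : S →+* R) (A : α → Matrix n n S) (l : List α) :
    ((l.map A).prod).map f = (l.map fun a => (A a).map f).prod := by
  simpa only [List.map_map, Function.comp_def, RingHom.mapMatrix_apply] using
    map_list_prod f.mapMatrix (l.map A)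

theorem pow_length_smul_prod_map [CommSemiring R] {M : α → Matrix n n R}
    {A : α → Matrix n n S} {c : R} {f : S →+* R} (h : ∀ a, c • M a = (A a).map f) (l : List α) :
    c ^ l.length • (l.map M).prod = ((l.map A).prod).map f := by
  rw [map_prod_map_eq_prod_map, ← funext h]
  simpa only [List.map_map, Function.comp_def, List.length_map] using List.smul_prod (l.map M) c

end Integrality

/-- The integer matrices `5 • Rᵢ`, to be reduced modulo 5. -/
def intGen : Fin 3 → Matrix (Fin 3) (Fin 3) ℤ :=
  ![!![5, 0, 0; 0, -3, 4; 0, -4, -3],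
    !![-3, 0, -4; 0, 5, 0; 4, 0, -3],
    !![-3, 4, 0; -4, -3, 0; 0, 0, 5]]

/-- The integer matrix `5 • RgenLetter p`; inverses become transposes since `Rᵢ` is orthogonal. -/
def intLetter (p : Fin 3 × Bool) : Matrix (Fin 3) (Fin 3) ℤ :=
  if p.2 then intGen p.1 else (intGen p.1)ᵀ

/-- The six points of the conic `x² + y² + z² = 0` over `𝔽₅`, indexed by the six letters so that the
point of `p` spans the column space of `intLetter p` modulo 5. -/
def conicPoint (p : Fin 3 × Bool) : Fin 3 → ZMod 5 :=
  (if p.2 then ![![0, 2, 1], ![1, 0, 2], ![2, 1, 0]]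
    else ![![0, 1, 2], ![2, 0, 1], ![1, 2, 0]]) p.1

theorem Rgen_mul_transpose (i : Fin 3) : Rgen i * (Rgen i)ᵀ = 1 := by
  ext a b
  fin_cases i <;> fin_cases a <;> fin_cases b <;>
    norm_num [Rgen, Matrix.mul_apply, Fin.sum_univ_succ]

theorem five_smul_Rgen (i : Fin 3) : (5 : ℚ) • Rgen i = (intGen i).map (Int.castRingHom ℚ) := by
  ext a b
  fin_cases i <;> fin_cases a <;> fin_cases b <;> norm_num [Rgen, intGen]

theorem five_smul_RgenLetter (p : Fin 3 × Bool) :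
    (5 : ℚ) • RgenLetter p = (intLetter p).map (Int.castRingHom ℚ) := by
  obtain ⟨i, _ | _⟩ := p
  · simp only [RgenLetter, intLetter, Bool.false_eq_true, if_false,
      inv_eq_right_inv (Rgen_mul_transpose i), ← transpose_smul, five_smul_Rgen, transpose_map]
  · exact five_smul_Rgen i

theorem intLetter_map_zmod (p : Fin 3 × Bool) :
    (intLetter p).map (Int.castRingHom (ZMod 5)) =
      vecMulVec (conicPoint p) (conicPoint (p.1, !p.2)) := by
  revert p
  decide

theorem conicPoint_dotProduct_eq_zero_iff {p q : Fin 3 × Bool} :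
    conicPoint p ⬝ᵥ conicPoint q = 0 ↔ p = q := by
  revert p q
  decide

theorem conicPoint_ne_zero (p : Fin 3 × Bool) : conicPoint p ≠ 0 := by
  revert p
  decide

theorem prod_intLetter_map_zmod_ne_zero {w : List (Fin 3 × Bool)}
    (hw : w.IsChain fun p q => q ≠ (p.1, !p.2)) :
    ((w.map intLetter).prod).map (Int.castRingHom (ZMod 5)) ≠ 0 := by
  have : Fact (Nat.Prime 5) := ⟨Nat.prime_five⟩
  simp only [map_prod_map_eq_prod_map, intLetter_map_zmod]
  exact prod_map_vecMulVec_ne_zero conicPoint_ne_zero (fun p => conicPoint_ne_zero _) <|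
    hw.imp fun _ _ hne h => hne (conicPoint_dotProduct_eq_zero_iff.mp h).symm

theorem stmt2 (t : ℕ) (ht : 1 ≤ t) (w : List (Fin 3 × Bool)) (hlen : w.length = t)
    (hred : w.Chain' (fun p q => q ≠ (p.1, !p.2)))
    (P : Matrix (Fin 3) (Fin 3) ℚ) (hP : P = (w.map RgenLetter).prod) :
    (∀ i j, ∃ n : ℤ, (5 : ℚ) ^ t * P i j = (n : ℚ)) ∧
    (∃ i j, ∀ n : ℤ, (5 : ℚ) ^ t * P i j = (n : ℚ) → ¬ (5 : ℤ) ∣ n) ∧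
    (∃ i j, (P i j).den = 5 ^ t) := by
  have hPN (i j) : (5 : ℚ) ^ t * P i j = ((w.map intLetter).prod i j : ℤ) := by
    subst hlen hP
    exact congr_fun₂ (pow_length_smul_prod_map five_smul_RgenLetter w) i j
  obtain ⟨i, j, hij⟩ := exists_not_dvd_of_map_intCast_ne_zero (prod_intLetter_map_zmod_ne_zero hred)
  refine ⟨fun i j => ⟨_, hPN i j⟩, ⟨i, j, fun n hn => ?_⟩, i, j,
    den_eq_pow_of_pow_mul_eq_intCast Nat.prime_five (hPN i j) hij⟩
  rwa [← Int.cast_injective ((hPN i j).symm.trans hn)]
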